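/- Two claims about the product Poisson model. (i) There is an absolute constant c > 0 such that for every integer n ≥ 3 there exists λ > 0 with E[ min( χ²( Poi(λ̂_n) ‖ Poi(λ) ), n ) ] ≥ c / log n, where λ̂_n = (1/n)Σ_{i=1}^n X_i and X_1,…,X_n are i.i.d. Poi(λ); in particular this expectation is not O(1/n). (ii) Let n be even, let X_1,…,X_n be i.i.d. from ∏_{j=1}^d Poi(λ_j) on ℕ^d with λ_j > 0, let λ̂_j = (2/n)Σ_{i=1}^{n/2} X_{i,j}, let T = Σ_{i=n/2+1}^{n} X_i, and conditionally on (X_1,…,X_{n/2}) let Z ∼ ∏_{j=1}^d Poi(m·λ̂_j) be independent of T; set T̂ = T + Z. Then for every integer m ≥ 0, E_{(X_1,…,X_{n/2})}[ ‖ ℒ(T̂ | X_1,…,X_{n/2}) − ∏_{j=1}^d Poi((n/2 + m)λ_j) ‖_TV ] ≤ m√(2d)/n. -/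

import Mathlib

open MeasureTheory ProbabilityTheory
open scoped ENNReal NNReal BigOperators

/-- Total variation distance between two measures: `sup_A |P(A) - Q(A)|`. -/
noncomputable def tvDist {X : Type*} [MeasurableSpace X] (μ ν : Measure X) : ℝ :=
  ⨆ A : {s : Set X // MeasurableSet s}, |(μ A).toReal - (ν A).toReal|

/-!
(i) Choose `λ` so that the total count of the sample is Poisson with mean `1 / (4 n log n)`. With
probability of that order the total equals one, so that `λ̂ₙ = 1 / n` and the `χ²`-divergence
exceeds `n`; this single event contributes order `1 / log n` to the expectation.

(ii) Given the first half of the sample, `T̂` is product Poisson with rates `aⱼ = r λⱼ + m λ̂ⱼ`,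
`r = n / 2`, to be compared with `bⱼ = (r + m) λⱼ`. Since `χ²` has infinite mean here, distances are
measured by the Hellinger affinity `ρ`: it is multiplicative over coordinates, equals
`exp (-(√a - √b)² / 2)` for Poisson laws, and satisfies `TV² ≤ 1 - ρ²`. Hence
`TV² ≤ ∑ⱼ (√aⱼ - √bⱼ)² ≤ ∑ⱼ m² (λ̂ⱼ - λⱼ)² / (4 r λⱼ)`, and Jensen together with
`Var λ̂ⱼ = λⱼ / r` gives the bound.
-/

section CauchySchwarz

variable {X : Type*} [MeasurableSpace X] {μ : Measure X}

theorem integral_abs_mul_le_sqrt_mul_sqrt {f g : X → ℝ} (hf : MemLp f 2 μ) (hg : MemLp g 2 μ) :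
    ∫ x, |f x * g x| ∂μ ≤ √(∫ x, f x ^ 2 ∂μ) * √(∫ x, g x ^ 2 ∂μ) := by
  have h := integral_mul_norm_le_Lp_mul_Lq (μ := μ) Real.HolderConjugate.two_two
    (by simpa using hf) (by simpa using hg)
  simpa [Real.sqrt_eq_rpow, abs_mul] using h

theorem integral_le_sqrt_integral_of_le_sqrt [IsProbabilityMeasure μ] {f g : X → ℝ}
    (hf : ∀ x, 0 ≤ f x) (hfg : ∀ x, f x ≤ √(g x)) (hg : ∀ x, 0 ≤ g x) (hgi : Integrable g μ) :
    ∫ x, f x ∂μ ≤ √(∫ x, g x ∂μ) := by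
  have hsqrt : MemLp (fun x => √(g x)) 2 μ := by
    rw [memLp_two_iff_integrable_sq hgi.1.aemeasurable.sqrt.aestronglyMeasurable]
    simpa only [Real.sq_sqrt (hg _)] using hgi
  calc ∫ x, f x ∂μ
    _ ≤ ∫ x, √(g x) ∂μ := integral_mono_of_nonneg (ae_of_all _ hf)
        (hsqrt.integrable one_le_two) (ae_of_all _ hfg)
    _ ≤ √(∫ x, g x ∂μ) := by
      simpa [Real.sq_sqrt (hg _), abs_of_nonneg (Real.sqrt_nonneg _)] using
        integral_abs_mul_le_sqrt_mul_sqrt hsqrt (memLp_const (1 : ℝ))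

end CauchySchwarz

section Hellinger

variable {X : Type*} [MeasurableSpace X]

/-- The Hellinger affinity (Bhattacharyya coefficient) `∫ √(dμ/dν) dν`, which is multiplicative
over product measures and controls the total variation distance. -/
noncomputable def hellingerAffinity (μ ν : Measure X) : ℝ :=
  ∫ x, √(μ.rnDeriv ν x).toReal ∂ν

theorem tvDist_nonneg (μ ν : Measure X) : 0 ≤ tvDist μ ν :=
  Real.iSup_nonneg fun _ => abs_nonneg _

theorem memLp_sqrt_rnDeriv (μ ν : Measure X) [IsFiniteMeasure μ] :
    MemLp (fun x => √(μ.rnDeriv ν x).toReal) 2 ν := by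
  rw [memLp_two_iff_integrable_sq
    (Measure.measurable_rnDeriv μ ν).ennreal_toReal.sqrt.aestronglyMeasurable]
  simpa only [Real.sq_sqrt ENNReal.toReal_nonneg] using Measure.integrable_toReal_rnDeriv

theorem hellingerAffinity_eq_tsum [Countable X] [MeasurableSingletonClass X] {μ ν : Measure X}
    [IsFiniteMeasure μ] [IsFiniteMeasure ν] (h : μ ≪ ν) :
    hellingerAffinity μ ν = ∑' x, √(μ.real {x} * ν.real {x}) := by
  have hatom (x : X) : μ.real {x} = ν.real {x} * (μ.rnDeriv ν x).toReal := by
    rw [← Measure.setIntegral_toReal_rnDeriv h, integral_singleton, smul_eq_mul]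
  rw [hellingerAffinity, integral_countable ((memLp_sqrt_rnDeriv μ ν).integrable one_le_two)]
  congr 1 with x
  rw [hatom, mul_right_comm, ← sq, Real.sqrt_mul (sq_nonneg _), Real.sqrt_sq measureReal_nonneg,
    smul_eq_mul]

variable {μ ν : Measure X} [IsProbabilityMeasure μ] [IsProbabilityMeasure ν]

theorem two_mul_tvDist_le_integral_abs (h : μ ≪ ν) :
    2 * tvDist μ ν ≤ ∫ x, |(μ.rnDeriv ν x).toReal - 1| ∂ν := by
  set D : X → ℝ := fun x => (μ.rnDeriv ν x).toReal - 1
  have hD : Integrable D ν := Measure.integrable_toReal_rnDeriv.sub (integrable_const 1)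
  have hset (A : Set X) : ∫ x in A, D x ∂ν = μ.real A - ν.real A := by
    rw [integral_sub Measure.integrable_toReal_rnDeriv.integrableOn (integrable_const 1),
      Measure.setIntegral_toReal_rnDeriv h]
    simp
  have hcompl {A : Set X} (hA : MeasurableSet A) :
      ∫ x in Aᶜ, D x ∂ν = -(μ.real A - ν.real A) := by
    rw [hset, probReal_compl_eq_one_sub hA, probReal_compl_eq_one_sub hA]
    ring
  rw [← le_div_iff₀' two_pos]
  refine ciSup_le fun ⟨A, hA⟩ => ?_
  have hin : |μ.real A - ν.real A| ≤ ∫ x in A, |D x| ∂ν :=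
    hset A ▸ abs_integral_le_integral_abs
  have hout : |μ.real A - ν.real A| ≤ ∫ x in Aᶜ, |D x| ∂ν := by
    rw [← abs_neg, ← hcompl hA]
    exact abs_integral_le_integral_abs
  rw [le_div_iff₀' two_pos, two_mul, ← integral_add_compl hA hD.abs]
  exact add_le_add hin hout

theorem tvDist_le_sqrt_one_sub_hellingerAffinity_sq (h : μ ≪ ν) :
    tvDist μ ν ≤ √(1 - hellingerAffinity μ ν ^ 2) := by
  set f : X → ℝ := fun x => √(μ.rnDeriv ν x).toReal
  have hf : MemLp f 2 ν := memLp_sqrt_rnDeriv μ ν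
  have hsq (x : X) : f x ^ 2 = (μ.rnDeriv ν x).toReal := Real.sq_sqrt ENNReal.toReal_nonneg
  have hmass : ∫ x, f x ^ 2 ∂ν = 1 := by
    simp only [hsq, Measure.integral_toReal_rnDeriv h, probReal_univ]
  have hshift (c : ℝ) :
      ∫ x, (f x + c) ^ 2 ∂ν = 1 + 2 * c * hellingerAffinity μ ν + c ^ 2 := by
    have hlin : Integrable (fun x => 2 * c * f x + c ^ 2) ν :=
      ((hf.integrable one_le_two).const_mul _).add (integrable_const _)
    calc ∫ x, (f x + c) ^ 2 ∂ν
      _ = ∫ x, (f x ^ 2 + (2 * c * f x + c ^ 2)) ∂ν := by congr 1; ext x; ring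
      _ = _ := by
        rw [integral_add hf.integrable_sq hlin, hmass, integral_add
          ((hf.integrable one_le_two).const_mul _) (integrable_const _), integral_const_mul]
        simp [hellingerAffinity, f, add_assoc]
  have hmul : 2 * tvDist μ ν ≤ 2 * √(1 - hellingerAffinity μ ν ^ 2) :=
    calc 2 * tvDist μ ν
      _ ≤ ∫ x, |(f x + -1) * (f x + 1)| ∂ν := by
        refine (two_mul_tvDist_le_integral_abs h).trans_eq ?_
        congr 1 with x
        rw [← hsq]
        ring_nf
      _ ≤ √(∫ x, (f x + -1) ^ 2 ∂ν) * √(∫ x, (f x + 1) ^ 2 ∂ν) :=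
        integral_abs_mul_le_sqrt_mul_sqrt (hf.add (memLp_const _)) (hf.add (memLp_const _))
      _ = √(2 ^ 2 * (1 - hellingerAffinity μ ν ^ 2)) := by
        rw [← Real.sqrt_mul (integral_nonneg fun x => sq_nonneg _), hshift, hshift]
        ring_nf
      _ = 2 * √(1 - hellingerAffinity μ ν ^ 2) := by
        rw [Real.sqrt_mul (by positivity), Real.sqrt_sq two_pos.le]
  exact le_of_mul_le_mul_left hmul two_pos

end Hellinger

section Pi

variable {ι : Type*} [Fintype ι]

theorem pi_conv_pi {M : Type*} [AddMonoid M] [MeasurableSpace M] [MeasurableAdd₂ M]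
    (μ ν : ι → Measure M) [∀ i, SigmaFinite (μ i)] [∀ i, SigmaFinite (ν i)]
    [∀ i, SigmaFinite (μ i ∗ ν i)] :
    Measure.pi μ ∗ Measure.pi ν = Measure.pi fun i => μ i ∗ ν i := by
  rw [Measure.conv, ← (measurePreserving_arrowProdEquivProdArrow M M ι μ ν).map_eq,
    Measure.map_map (by fun_prop) (by fun_prop)]
  exact Measure.pi_map_pi (μ := fun i => (μ i).prod (ν i)) (f := fun _ (p : M × M) => p.1 + p.2)
    (hμ := fun i => inferInstanceAs (SigmaFinite (μ i ∗ ν i))) fun i => by fun_prop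

variable {X : ι → Type*} [∀ i, MeasurableSpace (X i)]

theorem pi_withDensity (ν : ∀ i, Measure (X i)) [∀ i, IsProbabilityMeasure (ν i)]
    {f : ∀ i, X i → ℝ≥0∞} (hf : ∀ i, Measurable (f i))
    [∀ i, SigmaFinite ((ν i).withDensity (f i))] :
    Measure.pi (fun i => (ν i).withDensity (f i)) =
      (Measure.pi ν).withDensity fun x => ∏ i, f i (x i) := by
  refine Measure.pi_eq fun s hs => ?_
  have hind (x : ∀ i, X i) : (Set.univ.pi s).indicator (fun x => ∏ i, f i (x i)) x =
      ∏ i, (s i).indicator (f i) (x i) := by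
    classical
    simp only [Set.indicator_apply, Set.mem_univ_pi, Finset.prod_ite_zero, Finset.mem_univ,
      true_imp_iff]
  have hmeas (i : ι) : Measurable ((s i).indicator (f i)) := (hf i).indicator (hs i)
  rw [withDensity_apply _ (.univ_pi hs), ← lintegral_indicator (.univ_pi hs)]
  simp only [hind]
  rw [lintegral_prod_eq_prod_lintegral_of_indepFun _ _
    (iIndepFun_pi fun i => (hmeas i).aemeasurable)
    fun i => (hmeas i).comp (measurable_pi_apply i)]
  refine Finset.prod_congr rfl fun i _ => ?_
  rw [(measurePreserving_eval ν i).lintegral_comp (hmeas i), lintegral_indicator (hs i),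
    withDensity_apply _ (hs i)]

variable {μ ν : ∀ i, Measure (X i)} [∀ i, IsProbabilityMeasure (μ i)]
  [∀ i, IsProbabilityMeasure (ν i)]

theorem pi_eq_withDensity_prod_rnDeriv (h : ∀ i, μ i ≪ ν i) :
    Measure.pi μ = (Measure.pi ν).withDensity fun x => ∏ i, (μ i).rnDeriv (ν i) (x i) := by
  rw [← pi_withDensity ν fun i => Measure.measurable_rnDeriv _ _]
  exact congrArg Measure.pi (funext fun i => (Measure.withDensity_rnDeriv_eq _ _ (h i)).symm)

theorem absolutelyContinuous_pi (h : ∀ i, μ i ≪ ν i) : Measure.pi μ ≪ Measure.pi ν :=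
  pi_eq_withDensity_prod_rnDeriv h ▸ withDensity_absolutelyContinuous _ _

theorem hellingerAffinity_pi (h : ∀ i, μ i ≪ ν i) :
    hellingerAffinity (Measure.pi μ) (Measure.pi ν) = ∏ i, hellingerAffinity (μ i) (ν i) := by
  have hdens : (Measure.pi μ).rnDeriv (Measure.pi ν) =ᵐ[Measure.pi ν]
      fun x => ∏ i, (μ i).rnDeriv (ν i) (x i) := by
    rw [pi_eq_withDensity_prod_rnDeriv h]
    exact Measure.rnDeriv_withDensity _ (by fun_prop)
  simp only [hellingerAffinity]
  rw [← integral_fintype_prod_eq_prod]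
  refine integral_congr_ae (hdens.mono fun x hx => ?_)
  simp only [hx, ENNReal.toReal_prod]
  exact Real.sqrt_prod _ fun i _ => ENNReal.toReal_nonneg

end Pi

section Poisson

theorem hasLaw_sum_poissonMeasure {Ω κ : Type*} [MeasurableSpace Ω] {P : Measure Ω}
    {X : κ → Ω → ℕ} {r : κ → ℝ≥0} (hind : iIndepFun X P) (hmeas : ∀ i, Measurable (X i))
    (hlaw : ∀ i, HasLaw (X i) (poissonMeasure (r i)) P) (s : Finset κ) :
    HasLaw (∑ i ∈ s, X i) (poissonMeasure (∑ i ∈ s, r i)) P := by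
  classical
  have := hind.isProbabilityMeasure
  induction s using Finset.induction_on with
  | empty =>
    have hzero : poissonMeasure 0 = Measure.dirac 0 := by
      refine Measure.ext_of_singleton fun n => ?_
      rcases n with _ | n <;> simp [poissonMeasure_singleton]
    rw [Finset.sum_empty, Finset.sum_empty, hzero]
    exact hasLaw_dirac_of_ae_eq ae_eq_rfl
  | insert a s ha ih =>
    rw [Finset.sum_insert ha, Finset.sum_insert ha]
    exact (hind.indepFun_finsetSum_of_notMem hmeas ha).symm.hasLaw_add_poissonMeasure (hlaw a) ih

/-- The Stein–Chen identity `E[N g(N)] = r E[g(N + 1)]` for `N ∼ Poi(r)`. -/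
theorem hasSum_poisson_natCast_mul {r s : ℝ} {g : ℕ → ℝ}
    (h : HasSum (fun n => Real.exp (-r) * r ^ n / n.factorial * g (n + 1)) s) :
    HasSum (fun n => Real.exp (-r) * r ^ n / n.factorial * (n * g n)) (r * s) := by
  rw [← hasSum_nat_add_iff' 1]
  convert! h.mul_left r using 1
  · ext n
    rw [Nat.factorial_succ]
    push_cast
    field_simp
    ring
  · simp

theorem hasSum_poisson_sq_sub (r : ℝ≥0) :
    HasSum (fun n : ℕ => Real.exp (-r) * r ^ n / n.factorial * ((n : ℝ) - r) ^ 2) r := by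
  have mass := hasSum_one_poissonMeasure r
  have mean : HasSum (fun n : ℕ => Real.exp (-r) * r ^ n / n.factorial * (n * 1)) (r * 1) :=
    hasSum_poisson_natCast_mul (by simpa using mass)
  have secondMoment :
      HasSum (fun n : ℕ => Real.exp (-r) * r ^ n / n.factorial * (n * n)) (r * (r * 1 + 1)) := by
    refine hasSum_poisson_natCast_mul ((mean.add mass).congr_fun fun n => ?_)
    push_cast
    ring
  convert! (secondMoment.add (mass.mul_left ((r : ℝ) ^ 2))).sub (mean.mul_left (2 * (r : ℝ)))
    using 1
  · ext n; ring
  · ring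

theorem integrable_sq_sub_poissonMeasure (r : ℝ≥0) :
    Integrable (fun n : ℕ => ((n : ℝ) - r) ^ 2) (poissonMeasure r) := by
  rw [integrable_poissonMeasure_iff]
  simpa using (hasSum_poisson_sq_sub r).summable

theorem integral_sq_sub_poissonMeasure (r : ℝ≥0) :
    ∫ n : ℕ, ((n : ℝ) - r) ^ 2 ∂(poissonMeasure r) = r := by
  rw [integral_poissonMeasure]
  simpa using (hasSum_poisson_sq_sub r).tsum_eq

theorem absolutelyContinuous_poissonMeasure (μ : Measure ℕ) {b : ℝ≥0} (hb : 0 < b) :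
    μ ≪ poissonMeasure b := by
  intro s hs
  have hs0 : s = ∅ := Set.eq_empty_of_forall_notMem fun n hn =>
    (poissonMeasure_real_singleton_pos n hb).ne' <| by
      rw [measureReal_def, measure_mono_null (Set.singleton_subset_iff.2 hn) hs,
        ENNReal.toReal_zero]
  rw [hs0, measure_empty]

theorem hellingerAffinity_poissonMeasure (a : ℝ≥0) {b : ℝ≥0} (hb : 0 < b) :
    hellingerAffinity (poissonMeasure a) (poissonMeasure b) =
      Real.exp (-((√a - √b) ^ 2 / 2)) := by
  have hterm (n : ℕ) : √((poissonMeasure a).real {n} * (poissonMeasure b).real {n}) =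
      Real.exp (-((a + b) / 2)) * ((√a * √b) ^ n / n.factorial) := by
    rw [Real.sqrt_eq_iff_eq_sq (by positivity) (by positivity), poissonMeasure_real_singleton,
      poissonMeasure_real_singleton, mul_pow, div_pow, ← pow_mul, mul_comm n 2, pow_mul, mul_pow,
      Real.sq_sqrt a.coe_nonneg, Real.sq_sqrt b.coe_nonneg, ← Real.exp_nat_mul]
    have hexp : Real.exp ((2 : ℕ) * -((a + b) / 2)) = Real.exp (-a) * Real.exp (-b) := by
      rw [← Real.exp_add]
      push_cast
      ring_nf
    rw [hexp]
    ring
  rw [hellingerAffinity_eq_tsum (absolutelyContinuous_poissonMeasure _ hb)]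
  simp only [hterm]
  rw [tsum_mul_left, (NormedSpace.expSeries_div_hasSum_exp (√a * √b)).tsum_eq,
    ← Real.exp_eq_exp_ℝ, ← Real.exp_add, sub_sq, Real.sq_sqrt a.coe_nonneg,
    Real.sq_sqrt b.coe_nonneg]
  ring_nf

end Poisson

section ProductPoisson

variable {ι : Type*} [Fintype ι]

/-- The product Poisson law `∏ⱼ Poi(λⱼ)` on `ι → ℕ`. -/
noncomputable abbrev productPoisson (lam : ι → ℝ≥0) : Measure (ι → ℕ) :=
  Measure.pi fun j => poissonMeasure (lam j)

theorem productPoisson_conv_productPoisson (a b : ι → ℝ≥0) :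
    productPoisson a ∗ productPoisson b = productPoisson (a + b) := by
  simp only [pi_conv_pi, poissonMeasure_conv_poissonMeasure]
  rfl

theorem tvDist_productPoisson_le (a : ι → ℝ≥0) {b : ι → ℝ≥0} (hb : ∀ j, 0 < b j) :
    tvDist (productPoisson a) (productPoisson b) ≤ √(∑ j, (√(a j) - √(b j)) ^ 2) := by
  have hac (j : ι) := absolutelyContinuous_poissonMeasure (poissonMeasure (a j)) (hb j)
  have haff : hellingerAffinity (productPoisson a) (productPoisson b) ^ 2 =
      Real.exp (-∑ j, (√(a j) - √(b j)) ^ 2) := by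
    rw [hellingerAffinity_pi hac]
    simp only [hellingerAffinity_poissonMeasure _ (hb _)]
    rw [← Real.exp_sum, ← Real.exp_nat_mul, Finset.sum_neg_distrib, ← Finset.sum_div]
    push_cast
    ring_nf
  refine (tvDist_le_sqrt_one_sub_hellingerAffinity_sq (absolutelyContinuous_pi hac)).trans
    (Real.sqrt_le_sqrt ?_)
  rw [haff]
  linarith [Real.one_sub_le_exp_neg (∑ j, (√(a j) - √(b j)) ^ 2)]

theorem sq_sqrt_sub_sqrt_le {a b t : ℝ} (ht : 0 < t) (ha : t ≤ a) (hb : t ≤ b) :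
    (√a - √b) ^ 2 ≤ (a - b) ^ 2 / (4 * t) := by
  have hsum : 4 * t ≤ (√a + √b) ^ 2 := by
    calc 4 * t = (√t + √t) ^ 2 := by rw [← two_mul, mul_pow, Real.sq_sqrt ht.le]; norm_num
      _ ≤ (√a + √b) ^ 2 := by gcongr
  have hprod : a - b = (√a - √b) * (√a + √b) := by
    rw [mul_comm, ← sq_sub_sq, Real.sq_sqrt (ht.le.trans ha), Real.sq_sqrt (ht.le.trans hb)]
  rw [le_div_iff₀ (by positivity), hprod, mul_pow]
  gcongr

theorem tvDist_amplified_le {r : ℝ≥0} (hr : 0 < r) (m : ℝ≥0) (q : ι → ℝ≥0) {lam : ι → ℝ≥0}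
    (hlam : ∀ j, 0 < lam j) :
    tvDist (productPoisson (r • lam) ∗ productPoisson (m • q)) (productPoisson ((r + m) • lam)) ≤
      √(∑ j, m ^ 2 / (4 * (r * lam j)) * ((q j : ℝ) - lam j) ^ 2) := by
  have hpos (j : ι) : 0 < ((r + m) • lam) j := mul_pos (by positivity) (hlam j)
  rw [productPoisson_conv_productPoisson]
  refine (tvDist_productPoisson_le _ hpos).trans
    (Real.sqrt_le_sqrt (Finset.sum_le_sum fun j _ => ?_))
  have hrlam : (0 : ℝ) < r * lam j := mul_pos hr (hlam j)
  simp only [Pi.add_apply, Pi.smul_apply, smul_eq_mul]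
  push_cast
  rw [add_mul]
  refine (sq_sqrt_sub_sqrt_le hrlam
    (le_add_of_nonneg_right (by positivity)) (le_add_of_nonneg_right (by positivity))).trans_eq ?_
  ring

end ProductPoisson

section EmpiricalRate

variable {κ ι : Type*} [Fintype κ]

/-- The empirical rate vector `λ̂ⱼ = |κ|⁻¹ ∑ᵢ xᵢⱼ` of a sample `x` indexed by `κ`. -/
noncomputable def empiricalRate (x : κ → ι → ℕ) (j : ι) : ℝ≥0 :=
  ((∑ i, x i j : ℕ) : ℝ≥0) / Fintype.card κ

theorem sq_empiricalRate_sub [Nonempty κ] (lam : ι → ℝ≥0) (j : ι) (x : κ → ι → ℕ) :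
    ((empiricalRate x j : ℝ) - lam j) ^ 2 =
      ((∑ i, x i j : ℕ) - (Fintype.card κ * lam j : ℝ≥0)) ^ 2 / (Fintype.card κ : ℝ) ^ 2 := by
  rw [← div_pow, empiricalRate]
  push_cast
  field_simp

variable [Fintype ι]

theorem hasLaw_total_count (lam : ι → ℝ≥0) (j : ι) :
    HasLaw (fun x : κ → ι → ℕ => ∑ i, x i j) (poissonMeasure (Fintype.card κ * lam j))
      (Measure.pi fun _ : κ => productPoisson lam) := by
  have hind : iIndepFun (fun i (x : κ → ι → ℕ) => x i j)
      (Measure.pi fun _ : κ => productPoisson lam) :=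
    iIndepFun_pi (X := fun _ (y : ι → ℕ) => y j) fun _ => (measurable_pi_apply j).aemeasurable
  have hlaw (i : κ) : HasLaw (fun x : κ → ι → ℕ => x i j) (poissonMeasure (lam j))
      (Measure.pi fun _ : κ => productPoisson lam) :=
    ((measurePreserving_eval (fun j => poissonMeasure (lam j)) j).comp
      (measurePreserving_eval (fun _ : κ => productPoisson lam) i)).hasLaw
  simpa [Finset.sum_fn] using hasLaw_sum_poissonMeasure hind (fun i => by fun_prop) hlaw .univ

variable [Nonempty κ]

theorem integrable_sq_empiricalRate_sub (lam : ι → ℝ≥0) (j : ι) :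
    Integrable (fun x => ((empiricalRate x j : ℝ) - lam j) ^ 2)
      (Measure.pi fun _ : κ => productPoisson lam) := by
  simp only [sq_empiricalRate_sub]
  have hlaw := hasLaw_total_count (κ := κ) lam j
  have hint := integrable_sq_sub_poissonMeasure (Fintype.card κ * lam j)
  rw [← hlaw.map_eq] at hint
  exact (hint.comp_aemeasurable hlaw.aemeasurable).div_const _

theorem integral_sq_empiricalRate_sub (lam : ι → ℝ≥0) (j : ι) :
    ∫ x, ((empiricalRate x j : ℝ) - lam j) ^ 2 ∂(Measure.pi fun _ : κ => productPoisson lam) =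
      lam j / Fintype.card κ := by
  have hvar := (hasLaw_total_count (κ := κ) lam j).integral_comp
    (f := fun s : ℕ => ((s : ℝ) - (Fintype.card κ * lam j : ℝ≥0)) ^ 2) (by fun_prop)
  simp only [Function.comp_def, integral_sq_sub_poissonMeasure] at hvar
  simp only [sq_empiricalRate_sub]
  rw [integral_div, hvar]
  push_cast
  field_simp

theorem integral_tvDist_amplified_le {r : ℝ≥0} (hr : 0 < r) (m : ℝ≥0)
    {lam : ι → ℝ≥0} (hlam : ∀ j, 0 < lam j) :
    ∫ x : κ → ι → ℕ,
        tvDist (productPoisson (r • lam) ∗ productPoisson (m • empiricalRate x))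
          (productPoisson ((r + m) • lam))
        ∂(Measure.pi fun _ => productPoisson lam) ≤
      √(m ^ 2 * Fintype.card ι / (4 * Fintype.card κ * r)) := by
  set G : (κ → ι → ℕ) → ℝ := fun x =>
    ∑ j, m ^ 2 / (4 * (r * lam j)) * ((empiricalRate x j : ℝ) - lam j) ^ 2
  have hterm (j : ι) : Integrable
      (fun x : κ → ι → ℕ => m ^ 2 / (4 * (r * lam j)) * ((empiricalRate x j : ℝ) - lam j) ^ 2)
      (Measure.pi fun _ => productPoisson lam) :=
    (integrable_sq_empiricalRate_sub lam j).const_mul _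
  have hG : ∫ x, G x ∂(Measure.pi fun _ => productPoisson lam) =
      m ^ 2 * Fintype.card ι / (4 * Fintype.card κ * r) := by
    have hlam0 (j : ι) : (lam j : ℝ) ≠ 0 := by exact_mod_cast (hlam j).ne'
    rw [integral_finsetSum _ fun j _ => hterm j]
    simp only [integral_const_mul, integral_sq_empiricalRate_sub]
    calc ∑ j, (m : ℝ) ^ 2 / (4 * (r * lam j)) * (lam j / Fintype.card κ)
      _ = ∑ _j : ι, (m : ℝ) ^ 2 / (4 * Fintype.card κ * r) :=
        Finset.sum_congr rfl fun j _ => by field_simp [hlam0 j]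
      _ = _ := by
        rw [Finset.sum_const, Finset.card_univ, nsmul_eq_mul]
        ring
  rw [← hG]
  exact integral_le_sqrt_integral_of_le_sqrt (fun x => tvDist_nonneg _ _)
    (fun x => tvDist_amplified_le hr m (empiricalRate x) hlam) (fun x => by positivity)
    (integrable_finsetSum _ fun j _ => hterm j)

end EmpiricalRate

section RareEvent

/-- The rate `λ` for which `n` samples have total count of mean `n λ = 1 / (4 n log n)`, so rare
that a single observed event throws the estimate `1 / n` far above `λ`. -/
noncomputable def rareRate (n : ℕ) : ℝ≥0 := Real.toNNReal (1 / (4 * n ^ 2 * Real.log n))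

theorem coe_rareRate (n : ℕ) : (rareRate n : ℝ) = 1 / (4 * n ^ 2 * Real.log n) :=
  Real.coe_toNNReal _ (by positivity)

variable {n : ℕ}

theorem one_le_log_natCast (hn : 3 ≤ n) : 1 ≤ Real.log n := by
  have hn3 : (3 : ℝ) ≤ n := by exact_mod_cast hn
  rw [Real.le_log_iff_exp_le (by linarith)]
  linarith [Real.exp_one_lt_d9]

theorem rareRate_pos (hn : 3 ≤ n) : 0 < rareRate n := by
  have hlog := one_le_log_natCast hn
  exact Real.toNNReal_pos.2 (by positivity)

theorem natCast_mul_rareRate_le (hn : 3 ≤ n) : n * (rareRate n : ℝ) ≤ 1 / 12 := by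
  have hn3 : (3 : ℝ) ≤ n := by exact_mod_cast hn
  have hlog := one_le_log_natCast hn
  have heq : n * (rareRate n : ℝ) = 1 / (4 * (n * Real.log n)) := by
    rw [coe_rareRate]
    field_simp
  rw [heq]
  gcongr
  nlinarith

theorem natCast_le_chiSq_inv_rareRate (hn : 3 ≤ n) :
    n ≤ Real.exp (((n : ℝ)⁻¹ - rareRate n) ^ 2 / rareRate n) - 1 := by
  have hn3 : (3 : ℝ) ≤ n := by exact_mod_cast hn
  have hlog := one_le_log_natCast hn
  have hexp : ((n : ℝ)⁻¹ - rareRate n) ^ 2 / rareRate n =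
      4 * Real.log n * (1 - n * rareRate n) ^ 2 := by
    rw [coe_rareRate]
    field_simp
  have hsq : 1 / 2 ≤ (1 - n * (rareRate n : ℝ)) ^ 2 := by
    nlinarith [natCast_mul_rareRate_le hn]
  have hbound : (n : ℝ) ^ 2 ≤ Real.exp (4 * Real.log n * (1 - n * rareRate n) ^ 2) := by
    rw [← Real.exp_log (show (0 : ℝ) < n ^ 2 by positivity), Real.log_pow, Real.exp_le_exp]
    push_cast
    nlinarith
  rw [hexp]
  nlinarith

theorem inv_log_le_mul_poissonMeasure_singleton_one (hn : 3 ≤ n) :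
    1 / 8 / Real.log n ≤ n * (poissonMeasure (n * rareRate n)).real {1} := by
  have hlog := one_le_log_natCast hn
  have hmean : (n : ℝ) * (n * rareRate n) = 1 / 4 / Real.log n := by
    rw [coe_rareRate]
    field_simp
  have hexp : 1 / 2 ≤ Real.exp (-(n * rareRate n)) := by
    linarith [natCast_mul_rareRate_le hn, Real.one_sub_le_exp_neg (n * rareRate n)]
  calc 1 / 8 / Real.log n
    _ = 1 / 2 * (1 / 4 / Real.log n) := by ring
    _ ≤ Real.exp (-(n * rareRate n)) * (n * (n * rareRate n)) := by
      rw [hmean]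
      gcongr
    _ = n * (poissonMeasure (n * rareRate n)).real {1} := by
      rw [poissonMeasure_real_singleton, Nat.factorial_one]
      push_cast
      ring

theorem inv_log_le_integral_min_chiSq (hn : 3 ≤ n) :
    1 / 8 / Real.log n ≤
      ∫ xs : Fin n → ℕ,
        min (Real.exp (((n : ℝ)⁻¹ * ∑ i, (xs i : ℝ) - rareRate n) ^ 2 / rareRate n) - 1) n
        ∂(Measure.pi fun _ => poissonMeasure (rareRate n)) := by
  set F : ℕ → ℝ := fun s =>
    min (Real.exp (((n : ℝ)⁻¹ * s - rareRate n) ^ 2 / rareRate n) - 1) n with hF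
  have hF_nonneg (s : ℕ) : 0 ≤ F s :=
    le_min (sub_nonneg.2 (Real.one_le_exp (by positivity))) n.cast_nonneg
  have hF_one : F 1 = n := by
    simpa [hF] using natCast_le_chiSq_inv_rareRate hn
  have hF_int : Integrable F (poissonMeasure (n * rareRate n)) :=
    .of_bound (by fun_prop) n (ae_of_all _ fun s => by
      rw [Real.norm_of_nonneg (hF_nonneg s)]
      exact min_le_right _ _)
  have hlaw : HasLaw (∑ i, fun xs : Fin n → ℕ => xs i) (poissonMeasure (n * rareRate n))
      (Measure.pi fun _ => poissonMeasure (rareRate n)) := by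
    simpa using hasLaw_sum_poissonMeasure
      (iIndepFun_pi (X := fun _ (k : ℕ) => k) fun _ : Fin n => aemeasurable_id)
      (fun i => by fun_prop)
      (fun i => (measurePreserving_eval (fun _ : Fin n => poissonMeasure (rareRate n)) i).hasLaw)
      Finset.univ
  calc 1 / 8 / Real.log n
    _ ≤ n * (poissonMeasure (n * rareRate n)).real {1} :=
      inv_log_le_mul_poissonMeasure_singleton_one hn
    _ = ∫ s in {1}, F s ∂(poissonMeasure (n * rareRate n)) := by
      rw [integral_singleton, hF_one, smul_eq_mul, mul_comm]
    _ ≤ ∫ s, F s ∂(poissonMeasure (n * rareRate n)) :=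
      setIntegral_le_integral hF_int (ae_of_all _ hF_nonneg)
    _ = _ := by
      rw [← hlaw.integral_comp (by fun_prop)]
      simp [hF]

end RareEvent

/-- Poisson model: failure of naive learning, and the combined
sufficiency + learning amplification bound.

(i) There is an absolute constant `c > 0` such that for every `n ≥ 3` there exists a
rate `λ > 0` with `E[min(χ²(Poi(λ̂_n) ‖ Poi(λ)), n)] ≥ c / log n`, where
`λ̂_n = (1/n) Σ_i X_i` is the empirical rate from `n` i.i.d. `Poi(λ)` samples and
`χ²(Poi(a)‖Poi(b)) = exp((a−b)²/b) − 1`.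

(ii) For the product Poisson model `∏_{j=1}^d Poi(λ_j)` with `n` even: splitting the
samples, computing `λ̂_j = (2/n) Σ_{i ≤ n/2} X_{i,j}` on the first half, and setting
`T̂ = T + Z` with `T = Σ_{i > n/2} X_i ∼ ∏_j Poi((n/2)λ_j)` and, conditionally on the
first half, `Z ∼ ∏_j Poi(m λ̂_j)` independent of `T`, the expected TV distance between
the conditional law of `T̂` and `∏_j Poi((n/2 + m)λ_j)` is at most `m√(2d)/n`. -/
theorem poisson_amplification_claims :
    (∃ c : ℝ, 0 < c ∧
      ∀ n : ℕ, 3 ≤ n → ∃ lam : ℝ≥0, 0 < lam ∧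
        c / Real.log n ≤
          ∫ xs : Fin n → ℕ,
            min (Real.exp ((((n : ℝ)⁻¹ * ∑ i, (xs i : ℝ)) - (lam : ℝ)) ^ 2 /
                (lam : ℝ)) - 1) (n : ℝ)
            ∂(Measure.pi fun _ : Fin n => poissonMeasure lam)) ∧
    (∀ (d n m : ℕ), Even n → 2 ≤ n → ∀ lam : Fin d → ℝ≥0, (∀ j, 0 < lam j) →
      ∫ x : Fin (n / 2) → Fin d → ℕ,
          tvDist
            (Measure.map (fun p : (Fin d → ℕ) × (Fin d → ℕ) => p.1 + p.2)
              ((Measure.pi fun j : Fin d =>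
                  poissonMeasure (((n / 2 : ℕ) : ℝ≥0) * lam j)).prod
                (Measure.pi fun j : Fin d =>
                  poissonMeasure ((m : ℝ≥0) *
                    (((2 * ∑ i, x i j : ℕ) : ℝ≥0) / (n : ℝ≥0))))))
            (Measure.pi fun j : Fin d =>
              poissonMeasure ((((n / 2 : ℕ) : ℝ≥0) + (m : ℝ≥0)) * lam j))
        ∂(Measure.pi fun _ : Fin (n / 2) =>
            Measure.pi fun j : Fin d => poissonMeasure (lam j)) ≤
      (m : ℝ) * Real.sqrt (2 * d) / n) := by
  refine ⟨⟨1 / 8, by norm_num, fun n hn =>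
    ⟨rareRate n, rareRate_pos hn, inv_log_le_integral_min_chiSq hn⟩⟩, ?_⟩
  rintro d _ m ⟨k, rfl⟩ hk lam hlam
  have hk0 : 0 < k := by omega
  have : Nonempty (Fin k) := ⟨⟨0, hk0⟩⟩
  have hrate (x : Fin k → Fin d → ℕ) (j : Fin d) :
      ((2 * ∑ i, x i j : ℕ) : ℝ≥0) / ((k + k : ℕ) : ℝ≥0) = empiricalRate x j := by
    rw [← two_mul, Nat.cast_mul, Nat.cast_mul, mul_div_mul_left _ _ (by simp), empiricalRate,
      Fintype.card_fin]
  rw [show (k + k) / 2 = k by omega]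
  simp only [hrate]
  refine (integral_tvDist_amplified_le (by exact_mod_cast hk0) m hlam).trans ?_
  rw [Real.sqrt_le_left (by positivity), div_pow, mul_pow, Real.sq_sqrt (by positivity)]
  simp only [Fintype.card_fin]
  push_cast
  rw [show ((k : ℝ) + k) ^ 2 = 4 * k * k by ring]
  gcongr
  linarith [d.cast_nonneg (α := ℝ)]
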